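/- Let (F,W,A,r) be a capacity-balanced many-to-one assignment market with a dominant diagonal optimal matching μ. Then: (1) the payoff vector (x^f;y^f) with x^f_i=Σ_{j∈μ(i)} a_{ij} for all i∈F and y^f_j=0 for all j∈W is a core allocation of v_γ; and (2) the payoff vector (x^w;y^w) with x^w_i=0 for all i∈F and y^w_j=a_{j^μ j} for all j∈W is a core allocation of v_γ. -/

import Mathlib

set_option linter.unusedSectionVars false
set_option linter.unusedVariables false

open Finset
open scoped Classical

noncomputable section

variable {F W : Type*} [Fintype F] [Fintype W]

/-- `μ` is a matching between the firm coalition `S` and the worker coalition `T`: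
each firm `i ∈ S` appears in at most `r i` pairs and each worker in `T` in at most one pair. -/
def IsMatching (r : F → ℕ) (S : Finset F) (T : Finset W) (μ : Finset (F × W)) : Prop :=
  (∀ p ∈ μ, p.1 ∈ S ∧ p.2 ∈ T) ∧
  (∀ i : F, (μ.filter fun p => p.1 = i).card ≤ r i) ∧
  (∀ j : W, (μ.filter fun p => p.2 = j).card ≤ 1)

/-- total value of a matching -/
def matchValue (A : F → W → ℝ) (μ : Finset (F × W)) : ℝ := ∑ p ∈ μ, A p.1 p.2

lemma empty_isMatching (r : F → ℕ) (S : Finset F) (T : Finset W) :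
    IsMatching r S T (∅ : Finset (F × W)) := by
  refine ⟨by simp, ?_, ?_⟩ <;> intro _ <;> simp

/-- worth of the coalition formed by firms `S` and workers `T`. -/
def vGamma (A : F → W → ℝ) (r : F → ℕ) (S : Finset F) (T : Finset W) : ℝ :=
  ((S ×ˢ T).powerset.filter fun μ => IsMatching r S T μ).sup'
    ⟨∅, Finset.mem_filter.mpr ⟨Finset.mem_powerset.mpr (Finset.empty_subset _),
        empty_isMatching r S T⟩⟩ (matchValue A)

/-- firms belonging to a coalition of `F ⊕ W` -/
def firmPart (C : Finset (F ⊕ W)) : Finset F := univ.filter (fun i => Sum.inl i ∈ C)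

/-- workers belonging to a coalition of `F ⊕ W` -/
def workerPart (C : Finset (F ⊕ W)) : Finset W := univ.filter (fun j => Sum.inr j ∈ C)

/-- the coalitional function of the many-to-one assignment game -/
def gameValue (A : F → W → ℝ) (r : F → ℕ) (C : Finset (F ⊕ W)) : ℝ :=
  vGamma A r (firmPart C) (workerPart C)

/-- core membership -/
def inCore {N : Type*} [Fintype N] (v : Finset N → ℝ) (z : N → ℝ) : Prop :=
  (∑ k, z k) = v univ ∧ ∀ C : Finset N, v C ≤ ∑ k ∈ C, z k

/-- optimal matching of the grand coalition -/
def IsOptimalMatching (A : F → W → ℝ) (r : F → ℕ) (μ : Finset (F × W)) : Prop :=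
  IsMatching r univ univ μ ∧
  ∀ μ' : Finset (F × W), IsMatching r univ univ μ' → matchValue A μ' ≤ matchValue A μ

/-- workers assigned to firm `i` under the assignment function `m` -/
def assignedTo (m : W → F) (i : F) : Finset W := univ.filter fun j => m j = i

/-- the matching associated with an assignment function (every worker matched) -/
def matchingOfFn (m : W → F) : Finset (F × W) := univ.image fun j => (m j, j)

/-- `m : W → F` represents an optimal matching of a capacity-balanced market that assigns
exactly `r i` workers to each firm `i` and leaves no worker unmatched. -/
def IsBalancedOptimal (A : F → W → ℝ) (r : F → ℕ) (m : W → F) : Prop :=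
  (∀ i : F, (assignedTo m i).card = r i) ∧
  IsOptimalMatching A r (matchingOfFn m)

/-- the projection of the core to the workers' payoffs -/
def CW (A : F → W → ℝ) (m : W → F) : Set (W → ℝ) :=
  { y | (∀ j : W, 0 ≤ y j ∧ y j ≤ A (m j) j) ∧
        ∀ j k : W, m j ≠ m k → A (m j) k - A (m j) j ≤ y k - y j }

/-- excess of a coalition at a payoff vector -/
def excess {N : Type*} (v : Finset N → ℝ) (z : N → ℝ) (S : Finset N) : ℝ :=
  v S - ∑ k ∈ S, z k

/-- maximum surplus `s_ij(z)` of `i` against `j` at `z` -/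
def maxSurplus {N : Type*} (v : Finset N → ℝ) (z : N → ℝ) (i j : N) : ℝ :=
  sSup { e | ∃ S : Finset N, i ∈ S ∧ j ∉ S ∧ e = excess v z S }

def isImputation {N : Type*} [Fintype N] (v : Finset N → ℝ) (z : N → ℝ) : Prop :=
  (∑ k, z k) = v univ ∧ ∀ k : N, v {k} ≤ z k

def inKernel {N : Type*} [Fintype N] (v : Finset N → ℝ) (z : N → ℝ) : Prop :=
  isImputation v z ∧ ∀ i j : N, i ≠ j → maxSurplus v z i j = maxSurplus v z j i

/-- A coalition is inessential if it admits a nontrivial partition into two coalitions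
whose values weakly majorize its own value. -/
def Inessential {N : Type*} (v : Finset N → ℝ) (R : Finset N) : Prop :=
  ∃ S T : Finset N, S.Nonempty ∧ T.Nonempty ∧ Disjoint S T ∧ S ∪ T = R ∧ v R ≤ v S + v T

def Essential {N : Type*} (v : Finset N → ℝ) (R : Finset N) : Prop :=
  R.Nonempty ∧ ¬ Inessential v R

/-- arcs of the tight digraph on `W ∪ {0}` (node `0` is `none`) -/
def tightArc (A : F → W → ℝ) (m : W → F) (y : W → ℝ) : Option W → Option W → Prop
  | none, none => False
  | none, some k => y k = 0
  | some j, none => y j = A (m j) j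
  | some j, some k => m j ≠ m k ∧ y k - y j = A (m j) k - A (m j) j


lemma vGamma_le_of (A : F → W → ℝ) (r : F → ℕ) (S : Finset F) (T : Finset W) (c : ℝ)
    (h : ∀ μ, IsMatching r S T μ → matchValue A μ ≤ c) : vGamma A r S T ≤ c := by
  unfold vGamma
  exact Finset.sup'_le _ _ fun μ hμ => h μ (Finset.mem_filter.mp hμ).2

lemma le_vGamma_of (A : F → W → ℝ) (r : F → ℕ) (S : Finset F) (T : Finset W)
    (μ : Finset (F × W)) (h : IsMatching r S T μ) : matchValue A μ ≤ vGamma A r S T := by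
  unfold vGamma
  refine Finset.le_sup' (matchValue A) (Finset.mem_filter.mpr ⟨Finset.mem_powerset.mpr ?_, h⟩)
  intro p hp
  exact Finset.mem_product.mpr (h.1 p hp)

lemma gameValue_univ_eq (A : F → W → ℝ) (r : F → ℕ) (m : W → F)
    (hm : IsBalancedOptimal A r m) :
    gameValue A r univ = ∑ j, A (m j) j := by
  have h1 : firmPart (univ : Finset (F ⊕ W)) = univ := by simp [firmPart]
  have h2 : workerPart (univ : Finset (F ⊕ W)) = univ := by simp [workerPart]
  have h3 : matchValue A (matchingOfFn m) = ∑ j, A (m j) j := by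
    unfold matchValue matchingOfFn
    rw [Finset.sum_image]
    intro a _ b _ hab
    exact (Prod.mk.inj hab).2
  unfold gameValue
  rw [h1, h2, ← h3]
  exact le_antisymm (vGamma_le_of A r _ _ _ hm.2.2) (le_vGamma_of A r _ _ _ hm.2.1)

lemma sum_elim_coalition (C : Finset (F ⊕ W)) (f : F → ℝ) (g : W → ℝ) :
    ∑ k ∈ C, Sum.elim f g k = ∑ i ∈ firmPart C, f i + ∑ j ∈ workerPart C, g j := by
  have h : C = (firmPart C).disjSum (workerPart C) := by
    ext k
    cases k <;> simp [firmPart, workerPart]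
  conv_lhs => rw [h]
  rw [Finset.sum_disjSum]
  simp

/-- in a dominant diagonal capacity-balanced market, both the
firm-optimal payoff vector (each firm gets the whole value of its assigned workers,
each worker gets 0) and the worker-optimal payoff vector (each firm gets 0, each worker
`j` gets `a_{j^μ j}`) are core allocations. -/
theorem dominantDiagonal_side_optimal_core (A : F → W → ℝ) (r : F → ℕ)
    (hA : ∀ i j, 0 ≤ A i j) (hbal : ∑ i, r i = Fintype.card W)
    (m : W → F) (hm : IsBalancedOptimal A r m)
    (hdd1 : ∀ (i : F) (T : Finset W), T.card ≤ r i →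
        ∑ j ∈ T, A i j ≤ ∑ j ∈ assignedTo m i, A i j)
    (hdd2 : ∀ (j : W) (i : F), A i j ≤ A (m j) j) :
    inCore (gameValue A r)
      (Sum.elim (fun i => ∑ j ∈ assignedTo m i, A i j) (fun _ => 0)) ∧
    inCore (gameValue A r)
      (Sum.elim (fun _ => 0) (fun j => A (m j) j)) := by
  have hU := gameValue_univ_eq A r m hm
  refine ⟨⟨?_, fun C => ?_⟩, ⟨?_, fun C => ?_⟩⟩
  · rw [hU, Fintype.sum_sum_type]
    simp only [Sum.elim_inl, Sum.elim_inr, Finset.sum_const_zero, add_zero]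
    rw [← Finset.sum_fiberwise (s := univ) (g := m) (f := fun j => A (m j) j)]
    refine Finset.sum_congr rfl fun i _ => ?_
    refine Finset.sum_congr rfl fun j hj => ?_
    rw [(Finset.mem_filter.mp hj).2]
  · rw [sum_elim_coalition, Finset.sum_const_zero, add_zero]
    refine vGamma_le_of A r _ _ _ fun μ hμ => ?_
    unfold matchValue
    rw [← Finset.sum_fiberwise_of_maps_to (t := firmPart C) (g := Prod.fst)
      (fun p hp => (hμ.1 p hp).1)]
    refine Finset.sum_le_sum fun i _ => ?_
    have hinj : Set.InjOn Prod.snd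
        ((μ.filter fun p => p.1 = i : Finset (F × W)) : Set (F × W)) := by
      intro a ha b hb hab
      have ha' := (Finset.mem_filter.mp ha).2
      have hb' := (Finset.mem_filter.mp hb).2
      exact Prod.ext (ha'.trans hb'.symm) hab
    have h := hdd1 i ((μ.filter fun p => p.1 = i).image Prod.snd)
      (Finset.card_image_le.trans (hμ.2.1 i))
    rw [Finset.sum_image hinj] at h
    refine le_trans (le_of_eq ?_) h
    refine Finset.sum_congr rfl fun p hp => ?_
    rw [(Finset.mem_filter.mp hp).2]
  · rw [hU, Fintype.sum_sum_type]
    simp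
  · rw [sum_elim_coalition, Finset.sum_const_zero, zero_add]
    refine vGamma_le_of A r _ _ _ fun μ hμ => ?_
    unfold matchValue
    have hinj : Set.InjOn Prod.snd (μ : Set (F × W)) := by
      intro a ha b hb hab
      exact Finset.card_le_one.mp (hμ.2.2 b.2) a
        (Finset.mem_filter.mpr ⟨ha, hab⟩) b (Finset.mem_filter.mpr ⟨hb, rfl⟩)
    calc ∑ p ∈ μ, A p.1 p.2 ≤ ∑ p ∈ μ, A (m p.2) p.2 :=
          Finset.sum_le_sum fun p _ => hdd2 p.2 p.1
      _ = ∑ j ∈ μ.image Prod.snd, A (m j) j := by rw [Finset.sum_image hinj]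
      _ ≤ _ := by
          refine Finset.sum_le_sum_of_subset_of_nonneg ?_ fun j _ _ => hA _ _
          intro j hj
          obtain ⟨p, hp, rfl⟩ := Finset.mem_image.mp hj
          exact (hμ.1 p hp).2


end
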